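/- arXiv:2404.09328 — 3 statements merged into one kernel-verified Lean document; each statement's English description precedes it below -/
import Mathlib

section
/- (Fundamental identity for convolution kernels.) Let H be a real Hilbert space, T > 0, let k̃ ∈ W^{1,1}([0,T]) (i.e., there is k̃' ∈ L¹(0,T) with k̃(t) = k̃(0) + ∫₀^t k̃'(s) ds for all t ∈ [0,T]), and let v ∈ L²(0,T;H). Then for a.e. t ∈ (0,T) the functions t ↦ (k̃ ∗ v)(t) = ∫₀^t k̃(t−s) v(s) ds (H-valued) and t ↦ (k̃ ∗ ‖v(·)‖²_H)(t) = ∫₀^t k̃(t−s) ‖v(s)‖²_H ds are differentiable at t, and ⟨(d/dt)(k̃ ∗ v)(t), v(t)⟩_H = (1/2) (d/dt)(k̃ ∗ ‖v(·)‖²_H)(t) + (1/2) k̃(t) ‖v(t)‖²_H + (1/2) ∫₀^t (−k̃'(s)) ‖v(t) − v(t−s)‖²_H ds. -/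
open MeasureTheory Real Set ENNReal
open scoped RealInnerProductSpace

/-!
Let `f : ℝ → E` be integrable on `(0, T)`. Writing `k (r - τ) = k 0 + ∫₀^{r-τ} k'` and applying
Fubini gives `(k ∗ f) r = ∫₀^r (k 0 • f + k' ∗ f)` (`convolution_eq_primitive`). Since `k' ∗ f` is
integrable, the Lebesgue differentiation theorem yields, for a.e. `t`,
`(k ∗ f)' t = k 0 • f t + (k' ∗ f) t` (`ae_hasDerivAt_convolution`).

Taking `f = v` and `f = ‖v‖²` turns the identity into pointwise algebra at almost every `t`: expand
`‖v t - v (t - s)‖²`, integrate against `k'`, which is legitimate because `k' ∗ v` and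
`k' ∗ ‖v‖²` converge absolutely at `t`, and use `∫₀^t k' = k t - k 0`.
-/

section

variable {E : Type*} [NormedAddCommGroup E] [NormedSpace ℝ E]

/-- Joint integrability of the convolution integrand on the whole plane, the hypothesis of every
application of Fubini below. -/
lemma integrable_smul_sub {g : ℝ → ℝ} {F : ℝ → E} (hg : Integrable g) (hF : Integrable F) :
    Integrable (fun p : ℝ × ℝ => g (p.1 - p.2) • F p.2) (volume.prod volume) :=
  hF.convolution_integrand (ContinuousLinearMap.lsmul ℝ ℝ).flip hg

/-- For `0 < t < T`, truncating both factors to `(0, T)` restricts the convolution integrand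
to `(0, t)`. -/
lemma indicator_smul_indicator_sub {T t : ℝ} (ht : t ∈ Ioo 0 T) (k' : ℝ → ℝ) (f : ℝ → E) (s : ℝ) :
    (Ioo 0 T).indicator k' s • (Ioo 0 T).indicator f (t - s)
      = (Ioo 0 t).indicator (fun s => k' s • f (t - s)) s := by
  obtain ⟨h0, h1⟩ := ht
  by_cases hs : s ∈ Ioo 0 t
  · rw [indicator_of_mem hs, indicator_of_mem, indicator_of_mem]
    · exact ⟨by linarith [hs.2], by linarith [hs.1]⟩
    · exact ⟨hs.1, hs.2.trans h1⟩
  · rw [indicator_of_notMem hs]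
    by_cases hs' : s ∈ Ioo 0 T
    · have : t - s ∉ Ioo 0 T := fun h => hs ⟨hs'.1, by linarith [h.1]⟩
      rw [indicator_of_notMem this, smul_zero]
    · rw [indicator_of_notMem hs', zero_smul]

/-- `(k ∗ f) r = ∫₀^r (k 0 • f + k' ∗ f)`, with `k'` and `f` extended by zero outside `(0, T)`. -/
lemma convolution_eq_primitive [CompleteSpace E] {T : ℝ} {k k' : ℝ → ℝ}
    (hk' : IntegrableOn k' (Ioo 0 T))
    (hk : ∀ t ∈ Icc (0 : ℝ) T, k t = k 0 + ∫ τ in Ioo 0 t, k' τ)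
    {f : ℝ → E} (hf : IntegrableOn f (Ioo 0 T)) {r : ℝ} (hr : r ∈ Ioo 0 T) :
    ∫ τ in Ioo 0 r, k (r - τ) • f τ = ∫ x in (0 : ℝ)..r, (k 0 • (Ioo 0 T).indicator f x
      + ∫ y, (Ioo 0 T).indicator k' (x - y) • (Ioo 0 T).indicator f y) := by
  obtain ⟨h0, h1⟩ := hr
  have hg : Integrable ((Ioo 0 T).indicator k') := hk'.integrable_indicator measurableSet_Ioo
  have hF : Integrable ((Ioo 0 T).indicator f) := hf.integrable_indicator measurableSet_Ioo
  set g := (Ioo 0 T).indicator k' with hgdef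
  set F := (Ioo 0 T).indicator f with hFdef
  have hΦ := integrable_smul_sub hg hF
  have hc : Integrable (fun x => ∫ y, g (x - y) • F y) := hΦ.integral_prod_left
  -- The same integrand restricted to `x ∈ (0, r)`, ready for exchanging the integrals.
  have hΦr : Integrable (fun p : ℝ × ℝ => g (p.1 - p.2) • F p.2)
      ((volume.restrict (Ioo 0 r)).prod volume) :=
    hΦ.mono_measure (Measure.prod_mono Measure.restrict_le_self le_rfl)
  have hswap : ∫ x in Ioo 0 r, ∫ y, g (x - y) • F y = ∫ y, ∫ x in Ioo 0 r, g (x - y) • F y :=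
    integral_integral_swap (f := fun x y => g (x - y) • F y) hΦr
  have hinner : (fun y => ∫ x in Ioo 0 r, g (x - y) • F y)
      = (Ioo 0 r).indicator (fun y => (k (r - y) - k 0) • f y) := by
    funext y
    by_cases hy : y ∈ Ioo 0 r
    · have hyT : y ∈ Ioo 0 T := ⟨hy.1, hy.2.trans h1⟩
      rw [indicator_of_mem hy, integral_smul_const]
      have hFy : F y = f y := indicator_of_mem hyT f
      rw [hFy, hk (r - y) ⟨by linarith [hy.2], by linarith [hy.1]⟩, add_sub_cancel_left]
      congr 1
      rw [← integral_indicator measurableSet_Ioo, ← integral_indicator measurableSet_Ioo,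
        ← integral_sub_right_eq_self ((Ioo 0 (r - y)).indicator k') y]
      congr 1
      funext x
      simp only [hgdef, indicator_apply, mem_Ioo]
      have := hy.1
      have := hy.2
      split_ifs <;> grind
    · rw [indicator_of_notMem hy]
      rw [setIntegral_congr_fun (g := fun _ => (0 : E)) measurableSet_Ioo]
      · simp
      · intro x hx
        by_cases hyT : y ∈ Ioo 0 T
        · have : x - y ∉ Ioo 0 T := fun h => hy ⟨hyT.1, by linarith [h.1, hx.2]⟩
          simp [hgdef, indicator_of_notMem this]
        · simp [hFdef, indicator_of_notMem hyT]
  have hFr : IntegrableOn (fun x => k 0 • F x) (Ioo 0 r) := (hF.smul (k 0)).integrableOn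
  have hinner_int : IntegrableOn (fun y => (k (r - y) - k 0) • f y) (Ioo 0 r) := by
    rw [← integrable_indicator_iff measurableSet_Ioo, ← hinner]
    exact hΦr.integral_prod_right
  rw [intervalIntegral.integral_of_le h0.le, integral_Ioc_eq_integral_Ioo,
    integral_add hFr hc.integrableOn, hswap, hinner,
    integral_indicator measurableSet_Ioo, ← integral_add hFr hinner_int]
  refine setIntegral_congr_fun measurableSet_Ioo fun y hy => ?_
  have hFy : F y = f y := indicator_of_mem (Ioo_subset_Ioo_right h1.le hy) f
  simp only [hFy, ← add_smul, add_sub_cancel]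

/-- For almost every `t`, the integral defining `(k' ∗ f) t` converges absolutely and
`(k ∗ f)' t = k 0 • f t + (k' ∗ f) t`. -/
lemma ae_hasDerivAt_convolution [CompleteSpace E] {T : ℝ} {k k' : ℝ → ℝ}
    (hk' : IntegrableOn k' (Ioo 0 T))
    (hk : ∀ t ∈ Icc (0 : ℝ) T, k t = k 0 + ∫ τ in Ioo 0 t, k' τ)
    {f : ℝ → E} (hf : IntegrableOn f (Ioo 0 T)) :
    ∀ᵐ t ∂(volume.restrict (Ioo 0 T)),
      IntegrableOn (fun s => k' s • f (t - s)) (Ioo 0 t) ∧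
      HasDerivAt (fun r => ∫ τ in Ioo 0 r, k (r - τ) • f τ)
        (k 0 • f t + ∫ s in Ioo 0 t, k' s • f (t - s)) t := by
  have hg : Integrable ((Ioo 0 T).indicator k') := hk'.integrable_indicator measurableSet_Ioo
  have hF : Integrable ((Ioo 0 T).indicator f) := hf.integrable_indicator measurableSet_Ioo
  have hΦ := integrable_smul_sub hg hF
  have hint : Integrable (fun x => k 0 • (Ioo 0 T).indicator f x
      + ∫ y, (Ioo 0 T).indicator k' (x - y) • (Ioo 0 T).indicator f y) :=
    (hF.smul (k 0)).add hΦ.integral_prod_left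
  filter_upwards [ae_restrict_mem measurableSet_Ioo,
    ae_restrict_of_ae hΦ.prod_right_ae,
    ae_restrict_of_ae (LocallyIntegrable.ae_hasDerivAt_integral hint.locallyIntegrable)] with t ht hti htd
  constructor
  · rw [← integrable_indicator_iff measurableSet_Ioo]
    refine (hti.comp_sub_left t).congr (Filter.Eventually.of_forall fun s => ?_)
    simp only [_root_.sub_sub_cancel]
    exact indicator_smul_indicator_sub ht k' f s
  · have hd := (htd 0).congr_of_eventuallyEq (f₁ := fun r => ∫ τ in Ioo 0 r, k (r - τ) • f τ)
      (by
        filter_upwards [isOpen_Ioo.mem_nhds ht] with r hr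
        exact convolution_eq_primitive hk' hk hf hr)
    convert hd using 1
    rw [indicator_of_mem ht, ← integral_indicator measurableSet_Ioo]
    congr 1
    rw [← integral_sub_left_eq_self
      (fun y => (Ioo 0 T).indicator k' (t - y) • (Ioo 0 T).indicator f y) volume t]
    simp only [_root_.sub_sub_cancel]
    congr 1
    funext s
    exact (indicator_smul_indicator_sub ht k' f s).symm

end

/-- Fundamental identity for convolution kernels, Gripenberg et al.:
for `k̃ ∈ W^{1,1}([0,T])` and `v ∈ L²(0,T;H)`, for a.e. `t ∈ (0,T)` the convolutions
`k̃ ∗ v` and `k̃ ∗ ‖v(·)‖²` are differentiable at `t` and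
`⟨d/dt (k̃ ∗ v)(t), v(t)⟩ = ½ d/dt (k̃ ∗ ‖v‖²)(t) + ½ k̃(t) ‖v(t)‖²
  + ½ ∫₀ᵗ (−k̃'(s)) ‖v(t) − v(t−s)‖² ds`. -/
theorem fundamental_convolution_identity
    {H : Type*} [NormedAddCommGroup H] [InnerProductSpace ℝ H] [CompleteSpace H]
    (T : ℝ) (hT : 0 < T)
    (ktil ktil' : ℝ → ℝ)
    (hk'int : IntegrableOn ktil' (Set.Ioo 0 T))
    (hW11 : ∀ t ∈ Set.Icc (0 : ℝ) T, ktil t = ktil 0 + ∫ τ in Set.Ioo 0 t, ktil' τ)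
    (v : ℝ → H)
    (hv_meas : AEStronglyMeasurable v (volume.restrict (Set.Ioo 0 T)))
    (hv_l2 : (∫⁻ t in Set.Ioo 0 T, ENNReal.ofReal (‖v t‖ ^ 2)) < ⊤) :
    ∀ᵐ t ∂(volume.restrict (Set.Ioo 0 T)),
      ∃ (D : H) (D2 : ℝ),
        HasDerivAt (fun r => ∫ τ in Set.Ioo 0 r, ktil (r - τ) • v τ) D t ∧
        HasDerivAt (fun r => ∫ τ in Set.Ioo 0 r, ktil (r - τ) * ‖v τ‖ ^ 2) D2 t ∧
        ⟪D, v t⟫ = (1 / 2) * D2 + (1 / 2) * ktil t * ‖v t‖ ^ 2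
          + (1 / 2) * ∫ τ in Set.Ioo 0 t, (-(ktil' τ)) * ‖v t - v (t - τ)‖ ^ 2 := by
  have hsq : IntegrableOn (fun t => ‖v t‖ ^ 2) (Ioo 0 T) := by
    refine ⟨hv_meas.norm.pow 2, ?_⟩
    rw [hasFiniteIntegral_iff_ofReal (Filter.Eventually.of_forall fun t => by positivity)]
    exact hv_l2
  have hv : IntegrableOn v (Ioo 0 T) :=
    ((memLp_two_iff_integrable_sq_norm hv_meas).2 hsq).integrable one_le_two
  filter_upwards [ae_restrict_mem measurableSet_Ioo, ae_hasDerivAt_convolution hk'int hW11 hv,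
    ae_hasDerivAt_convolution hk'int hW11 hsq] with t ht ⟨hi1, hd1⟩ ⟨hi2, hd2⟩
  refine ⟨_, _, hd1, hd2, ?_⟩
  have hk't : IntegrableOn ktil' (Ioo 0 t) := hk'int.mono_set (Ioo_subset_Ioo_right ht.2.le)
  have hcross : ⟪∫ s in Ioo 0 t, ktil' s • v (t - s), v t⟫
      = ∫ s in Ioo 0 t, ⟪v t, ktil' s • v (t - s)⟫ := by
    rw [real_inner_comm, integral_inner hi1]
  have hi3 : IntegrableOn (fun s => ⟪v t, ktil' s • v (t - s)⟫) (Ioo 0 t) :=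
    hi1.const_inner (v t)
  have hi4 : IntegrableOn (fun s => ktil' s * ‖v t‖ ^ 2) (Ioo 0 t) := hk't.mul_const _
  have hi5 : IntegrableOn (fun s => 2 * ⟪v t, ktil' s • v (t - s)⟫ - ktil' s * ‖v t‖ ^ 2)
      (Ioo 0 t) := (hi3.const_mul 2).sub hi4
  have hexp : ∫ s in Ioo 0 t, (-(ktil' s)) * ‖v t - v (t - s)‖ ^ 2
      = 2 * (∫ s in Ioo 0 t, ⟪v t, ktil' s • v (t - s)⟫)
        - (∫ s in Ioo 0 t, ktil' s) * ‖v t‖ ^ 2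
        - ∫ s in Ioo 0 t, ktil' s • ‖v (t - s)‖ ^ 2 := by
    rw [← integral_const_mul, ← integral_mul_const,
      ← integral_sub (hi3.const_mul 2) hi4,
      ← integral_sub hi5 hi2]
    refine integral_congr_ae (Filter.Eventually.of_forall fun s => ?_)
    simp only [norm_sub_sq_real, real_inner_smul_right, smul_eq_mul]
    ring
  rw [inner_add_left, real_inner_smul_left, real_inner_self_eq_norm_sq, hcross, hexp,
    hW11 t ⟨ht.1.le, ht.2.le⟩]
  simp only [smul_eq_mul]
  ring
end

section
/- (Local existence for a Caputo fractional initial value problem.) Let α ∈ (0,1), y₀ ∈ ℝ, K* > 0, t* > 0, set D = [0,t*] × [y₀ − K*, y₀ + K*], let g : D → ℝ be continuous, and set M* = sup_{(t,y) ∈ D} |g(t,y)|. Define T* = t* if M* = 0, and T* = min{ t*, (K* Γ(1+α)/M*)^{1/α} } otherwise. Then there exists a continuous function y : [0,T*] → ℝ with y(0) = y₀ and |y(t) − y₀| ≤ K* for all t ∈ [0,T*], satisfying the Caputo initial value problem ∂_t^α y(t) = g(t, y(t)) on (0,T*]; equivalently, y(t) = y₀ + (1/Γ(α)) ∫₀^t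 (t−s)^{α−1} g(s, y(s)) ds for all t ∈ [0,T*]. -/
/-!
The solution is a fixed point of the Volterra operator `A y = y₀ + Γ(α)⁻¹ J (g(·, y ·))`, where
`J h t = ∫₀ᵗ (t - s)^(α-1) h s ds`. Two facts about `J` carry the argument: for `|h| ≤ M` one has
`|J h t| ≤ M t^α / α`, and `J h` is `α`-Hölder with constant `2M/α`, independently of `h`
(`abs_volterraInt_le`, `abs_volterraInt_sub_le`).

Since Schauder's fixed point theorem is not available in Mathlib, the fixed point is obtained from
Tonelli's delayed equations `y t = (A y) (max (t - δ) 0)`. Each has a solution on `[0, T]`, because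
iterating the delayed operator determines the function on `[0, δ]`, `[0, 2δ]`, … and so becomes
stationary after finitely many steps (`exists_delayed_solution`). As `δ → 0` these solutions are
bounded and equi-Hölder, so by Arzelà–Ascoli a subsequence converges uniformly; dominated
convergence and the Hölder bound identify the limit as a fixed point of `A`
(`exists_volterra_solution`).

All this is done for a bounded continuous `G` on the whole plane, applied to the extension of `g`
that is constant along the projection onto the rectangle. The choice of `T*` together with the
first bound on `J` keeps the solution in the rectangle, where the extension agrees with `g`.
-/

open MeasureTheory Real Set
open Filter Topology

/-- The Riemann–Liouville fractional integral of order `α` without its factor `1 / Γ(α)`. It is an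
oriented interval integral, and is only used for `0 ≤ t`. -/
noncomputable def volterraInt (α : ℝ) (h : ℝ → ℝ) (t : ℝ) : ℝ :=
  ∫ s in (0 : ℝ)..t, (t - s) ^ (α - 1) * h s

lemma intervalIntegrable_kernel {α : ℝ} (hα : 0 < α) (t a b : ℝ) :
    IntervalIntegrable (fun s => (t - s) ^ (α - 1)) volume a b := by
  have := (intervalIntegral.intervalIntegrable_rpow' (a := t - a) (b := t - b)
    (show -1 < α - 1 by linarith)).comp_sub_left t
  simpa using this

lemma integral_kernel {α : ℝ} (hα : 0 < α) (t a b : ℝ) :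
    ∫ s in a..b, (t - s) ^ (α - 1) = ((t - a) ^ α - (t - b) ^ α) / α := by
  rw [intervalIntegral.integral_comp_sub_left (fun x => x ^ (α - 1)),
    integral_rpow (Or.inl (by linarith))]
  simp

lemma intervalIntegrable_kernel_mul {α : ℝ} (hα : 0 < α) {h : ℝ → ℝ} (hc : Continuous h)
    (t a b : ℝ) : IntervalIntegrable (fun s => (t - s) ^ (α - 1) * h s) volume a b :=
  (intervalIntegrable_kernel hα t a b).mul_continuousOn hc.continuousOn

lemma abs_integral_kernel_mul_le {α : ℝ} (hα : 0 < α) {h : ℝ → ℝ} {M : ℝ}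
    (hM : ∀ s, |h s| ≤ M) {t a : ℝ} (hat : a ≤ t) :
    |∫ s in a..t, (t - s) ^ (α - 1) * h s| ≤ M * (t - a) ^ α / α := by
  have key := intervalIntegral.norm_integral_le_of_norm_le (μ := volume) hat
    (f := fun s => (t - s) ^ (α - 1) * h s) (g := fun s => (t - s) ^ (α - 1) * M)
    (ae_of_all _ fun s hs => by
      have h0 : 0 ≤ (t - s) ^ (α - 1) := rpow_nonneg (by linarith [hs.2]) _
      rw [norm_mul, norm_eq_abs, norm_eq_abs, abs_of_nonneg h0]
      exact mul_le_mul_of_nonneg_left (hM s) h0)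
    ((intervalIntegrable_kernel hα t a t).mul_const M)
  rw [intervalIntegral.integral_mul_const, integral_kernel hα, sub_self, zero_rpow hα.ne',
    norm_eq_abs] at key
  exact key.trans_eq (by ring)

lemma abs_volterraInt_le {α : ℝ} (hα : 0 < α) {h : ℝ → ℝ} {M : ℝ}
    (hM : ∀ s, |h s| ≤ M) {t : ℝ} (ht : 0 ≤ t) : |volterraInt α h t| ≤ M * t ^ α / α := by
  simpa [volterraInt] using abs_integral_kernel_mul_le hα hM ht

lemma abs_volterraInt_sub_le_of_le {α : ℝ} (hα : α ∈ Ioo (0 : ℝ) 1) {h : ℝ → ℝ}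
    (hc : Continuous h) {M : ℝ} (hM : ∀ s, |h s| ≤ M) {u t : ℝ} (hu : 0 ≤ u) (hut : u ≤ t) :
    |volterraInt α h t - volterraInt α h u| ≤ 2 * M / α * (t - u) ^ α := by
  obtain ⟨h0, h1⟩ := hα
  have hM0 : 0 ≤ M := (abs_nonneg _).trans (hM 0)
  have hsplit : volterraInt α h t - volterraInt α h u =
      (∫ s in u..t, (t - s) ^ (α - 1) * h s) -
        ∫ s in (0 : ℝ)..u, ((u - s) ^ (α - 1) - (t - s) ^ (α - 1)) * h s := by
    unfold volterraInt
    rw [← intervalIntegral.integral_add_adjacent_intervals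
      (intervalIntegrable_kernel_mul h0 hc t 0 u) (intervalIntegrable_kernel_mul h0 hc t u t)]
    simp_rw [sub_mul]
    rw [intervalIntegral.integral_sub (intervalIntegrable_kernel_mul h0 hc u 0 u)
      (intervalIntegrable_kernel_mul h0 hc t 0 u)]
    ring
  -- The endpoint `s = u` is excluded because there the kernel takes the junk value `0 ^ (α-1) = 0`.
  have hne : ∀ᵐ s : ℝ, s ≠ u := compl_mem_ae_iff.2 (measure_singleton u)
  have key := intervalIntegral.norm_integral_le_of_norm_le (μ := volume) hu
    (f := fun s => ((u - s) ^ (α - 1) - (t - s) ^ (α - 1)) * h s)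
    (g := fun s => ((u - s) ^ (α - 1) - (t - s) ^ (α - 1)) * M)
    (by
      filter_upwards [hne] with s hs hs'
      have hlt : 0 < u - s := by linarith [lt_of_le_of_ne hs'.2 hs]
      have hd : 0 ≤ (u - s) ^ (α - 1) - (t - s) ^ (α - 1) :=
        sub_nonneg.2 (rpow_le_rpow_of_nonpos hlt (by linarith) (by linarith))
      rw [norm_mul, norm_eq_abs, norm_eq_abs, abs_of_nonneg hd]
      exact mul_le_mul_of_nonneg_left (hM s) hd)
    (((intervalIntegrable_kernel h0 u 0 u).sub (intervalIntegrable_kernel h0 t 0 u)).mul_const M)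
  rw [intervalIntegral.integral_mul_const, intervalIntegral.integral_sub
    (intervalIntegrable_kernel h0 u 0 u) (intervalIntegrable_kernel h0 t 0 u),
    integral_kernel h0, integral_kernel h0, sub_self, zero_rpow h0.ne', norm_eq_abs, sub_zero,
    sub_zero, sub_zero] at key
  have key2 := abs_integral_kernel_mul_le h0 hM hut
  have hmono : u ^ α ≤ t ^ α := rpow_le_rpow hu hut h0.le
  have hle : (u ^ α / α - (t ^ α - (t - u) ^ α) / α) * M ≤ M * (t - u) ^ α / α := by
    have : (u ^ α / α - (t ^ α - (t - u) ^ α) / α) * M =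
        M * (t - u) ^ α / α - M * (t ^ α - u ^ α) / α := by ring
    rw [this]
    have : 0 ≤ M * (t ^ α - u ^ α) / α := by
      have := sub_nonneg.2 hmono
      positivity
    linarith
  rw [hsplit]
  calc _ ≤ _ := abs_sub _ _
    _ ≤ M * (t - u) ^ α / α + M * (t - u) ^ α / α := add_le_add key2 (key.trans hle)
    _ = _ := by ring

/-- The `α`-Hölder bound, with the times truncated to `[0, ∞)` so that it holds for all reals. -/
lemma abs_volterraInt_sub_le {α : ℝ} (hα : α ∈ Ioo (0 : ℝ) 1) {h : ℝ → ℝ}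
    (hc : Continuous h) {M : ℝ} (hM : ∀ s, |h s| ≤ M) (a b : ℝ) :
    |volterraInt α h (max a 0) - volterraInt α h (max b 0)| ≤ 2 * M / α * |a - b| ^ α := by
  have hM0 : 0 ≤ M := (abs_nonneg _).trans (hM 0)
  have h0 := hα.1
  wlog hba : b ≤ a generalizing a b
  · rw [abs_sub_comm, abs_sub_comm a b]
    exact this b a (le_of_not_ge hba)
  refine (abs_volterraInt_sub_le_of_le hα hc hM (le_max_right b 0)
    (max_le_max_right 0 hba)).trans ?_
  have hle : max a 0 - max b 0 ≤ |a - b| :=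
    (le_abs_self _).trans (abs_max_sub_max_le_abs a b 0)
  have hnn : 0 ≤ max a 0 - max b 0 := sub_nonneg.2 (max_le_max_right 0 hba)
  have := rpow_le_rpow hnn hle h0.le
  gcongr

lemma tendsto_const_mul_abs_rpow {α : ℝ} (hα : 0 < α) (C : ℝ) :
    Tendsto (fun r : ℝ => C * |r| ^ α) (𝓝 0) (𝓝 0) := by
  have : Continuous fun r : ℝ => C * |r| ^ α :=
    continuous_const.mul (continuous_abs.rpow_const fun _ => Or.inr hα.le)
  simpa [zero_rpow hα.ne'] using this.tendsto 0

lemma continuous_volterraInt_max {α : ℝ} (hα : α ∈ Ioo (0 : ℝ) 1) {h : ℝ → ℝ}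
    (hc : Continuous h) {M : ℝ} (hM : ∀ s, |h s| ≤ M) :
    Continuous fun t => volterraInt α h (max t 0) :=
  (Metric.equicontinuous_of_continuity_modulus _ (tendsto_const_mul_abs_rpow hα.1 (2 * M / α))
    (fun _ : Unit => fun t => volterraInt α h (max t 0)) fun a b _ => by
      rw [dist_eq, dist_eq, abs_abs]
      exact abs_volterraInt_sub_le hα hc hM a b).continuous ()

/-- Tonelli's delayed equation is solvable: the iterates of the delayed operator stabilise on
`(-∞, kδ]` after `k` steps. -/
lemma exists_delayed_solution {α : ℝ} (hα : α ∈ Ioo (0 : ℝ) 1) {G : ℝ × ℝ → ℝ}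
    (hG : Continuous G) {M : ℝ} (hM : ∀ p, |G p| ≤ M) (y0 c T : ℝ) {δ : ℝ} (hδ : 0 < δ) :
    ∃ y : ℝ → ℝ, Continuous y ∧ ∀ t ≤ T,
      y t = y0 + c * volterraInt α (fun s => G (s, y s)) (max (t - δ) 0) := by
  let Φ : (ℝ → ℝ) → ℝ → ℝ := fun y t =>
    y0 + c * volterraInt α (fun s => G (s, y s)) (max (t - δ) 0)
  let z : ℕ → ℝ → ℝ := fun k => Φ^[k] fun _ => y0
  have hz : ∀ k, z (k + 1) = Φ (z k) := fun k => Function.iterate_succ_apply' _ _ _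
  have hcont : ∀ k, Continuous (z k) := by
    intro k
    induction k with
    | zero => exact continuous_const
    | succ k ih =>
      rw [hz]
      have := continuous_volterraInt_max hα (h := fun s => G (s, z k s))
        (hG.comp (continuous_id.prodMk ih)) (fun s => hM _)
      exact continuous_const.add
        (continuous_const.mul (this.comp (continuous_id.sub continuous_const)))
  have hagree : ∀ k : ℕ, ∀ t ≤ k * δ, z k t = z (k + 1) t := by
    intro k
    induction k with
    | zero =>
      intro t ht
      have ht' : max (t - δ) 0 = 0 := max_eq_right (by simp at ht; linarith)
      rw [hz]
      simp [z, Φ, ht', volterraInt]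
    | succ k ih =>
      intro t ht
      rw [hz (k + 1)]
      conv_lhs => rw [hz k]
      simp only [Φ, volterraInt]
      congr 2
      refine intervalIntegral.integral_congr fun s hs => ?_
      rw [uIcc_of_le (le_max_right _ _)] at hs
      have hm : max (t - δ) 0 ≤ k * δ := max_le (by push_cast at ht; linarith) (by positivity)
      simp only [ih s (hs.2.trans hm)]
  obtain ⟨N, hN⟩ := exists_nat_ge (T / δ)
  refine ⟨z N, hcont N, fun t ht => ?_⟩
  rw [hagree N t (ht.trans ((div_le_iff₀ hδ).1 hN)), hz]

/-- Peano-type existence for the Volterra equation with bounded continuous right-hand side. -/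
lemma exists_volterra_solution {α : ℝ} (hα : α ∈ Ioo (0 : ℝ) 1) {G : ℝ × ℝ → ℝ}
    (hG : Continuous G) {M : ℝ} (hM : ∀ p, |G p| ≤ M) (y0 c : ℝ) {T : ℝ} (hT : 0 ≤ T) :
    ∃ y : ℝ → ℝ, Continuous y ∧ ∀ t ∈ Icc 0 T,
      y t = y0 + c * volterraInt α (fun s => G (s, y s)) t := by
  have hα0 := hα.1
  have hM0 : 0 ≤ M := (abs_nonneg _).trans (hM 0)
  let δ : ℕ → ℝ := fun n => 1 / ((n : ℝ) + 1)
  have hδpos : ∀ n, 0 < δ n := fun n => Nat.one_div_pos_of_nat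
  have hδ : Tendsto δ atTop (𝓝 0) := tendsto_one_div_add_atTop_nhds_zero_nat
  choose Y hYc hY using fun n => exists_delayed_solution hα hG hM y0 c T (hδpos n)
  have hGc : ∀ y : ℝ → ℝ, Continuous y → Continuous fun s => G (s, y s) :=
    fun y hy => hG.comp (continuous_id.prodMk hy)
  let F : ℕ → BoundedContinuousFunction (Icc 0 T) ℝ := fun n =>
    BoundedContinuousFunction.mkOfCompact ⟨fun t => Y n t, (hYc n).comp continuous_subtype_val⟩
  have hF : ∀ n t, F n t = Y n t := fun n t => rfl
  let B : ℝ := |c| * (M * T ^ α / α)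
  have hcompact : IsCompact (closure (range F)) := by
    refine BoundedContinuousFunction.arzela_ascoli (Icc (y0 - B) (y0 + B)) isCompact_Icc _ ?_ ?_
    · rintro _ t ⟨n, rfl⟩
      have hle : |c * volterraInt α (fun s => G (s, Y n s)) (max (t - δ n) 0)| ≤ B := by
        rw [abs_mul]
        refine mul_le_mul_of_nonneg_left ?_ (abs_nonneg c)
        refine (abs_volterraInt_le hα0 (fun s => hM _) (le_max_right _ _)).trans ?_
        have : max (t - δ n) 0 ≤ T := max_le (by linarith [t.2.2, hδpos n]) hT
        gcongr
      rw [hF, hY n t t.2.2]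
      have := abs_le.1 hle
      constructor <;> linarith [this.1, this.2]
    · refine Metric.equicontinuous_of_continuity_modulus _
        (tendsto_const_mul_abs_rpow hα0 (|c| * (2 * M / α))) _ ?_
      rintro a b ⟨_, n, rfl⟩
      have := abs_volterraInt_sub_le hα (hGc _ (hYc n)) (fun s => hM _) (a - δ n) (b - δ n)
      rw [sub_sub_sub_cancel_right] at this
      change dist (F n a) (F n b) ≤ _
      rw [hF, hF, dist_eq, hY n a a.2.2, hY n b b.2.2, add_sub_add_left_eq_sub, ← mul_sub,
        abs_mul, mul_assoc, Subtype.dist_eq, dist_eq, abs_abs]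
      exact mul_le_mul_of_nonneg_left this (abs_nonneg c)
  obtain ⟨f, -, φ, hφ, hlim⟩ :=
    hcompact.tendsto_subseq (x := F) fun n => subset_closure (mem_range_self n)
  have hyc : Continuous (IccExtend hT f) := f.continuous.Icc_extend'
  set y : ℝ → ℝ := IccExtend hT f with hy
  have hptw : ∀ t ∈ Icc 0 T, Tendsto (fun n => Y (φ n) t) atTop (𝓝 (y t)) := by
    intro t ht
    rw [hy, IccExtend_of_mem hT f ht]
    exact ((continuous_eval_const (F := BoundedContinuousFunction (Icc 0 T) ℝ)
      (⟨t, ht⟩ : Icc 0 T)).tendsto f).comp hlim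
  refine ⟨y, hyc, fun t ht => tendsto_nhds_unique (hptw t ht) ?_⟩
  have hdom : Tendsto (fun n => volterraInt α (fun s => G (s, Y (φ n) s)) t) atTop
      (𝓝 (volterraInt α (fun s => G (s, y s)) t)) := by
    refine intervalIntegral.tendsto_integral_filter_of_dominated_convergence
      (fun s => (t - s) ^ (α - 1) * M) (Eventually.of_forall fun n => ?_)
      (Eventually.of_forall fun n => ae_of_all _ fun s hs => ?_)
      ((intervalIntegrable_kernel hα0 t 0 t).mul_const M) (ae_of_all _ fun s hs => ?_)
    · have := intervalIntegrable_kernel_mul hα0 (hGc _ (hYc (φ n))) t 0 t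
      exact this.def'.aestronglyMeasurable
    · rw [uIoc_of_le ht.1] at hs
      have h0 : 0 ≤ (t - s) ^ (α - 1) := rpow_nonneg (by linarith [hs.2]) _
      rw [norm_mul, norm_eq_abs, norm_eq_abs, abs_of_nonneg h0]
      exact mul_le_mul_of_nonneg_left (hM _) h0
    · rw [uIoc_of_le ht.1] at hs
      have hs' := hptw s ⟨hs.1.le, hs.2.trans ht.2⟩
      exact ((hG.tendsto (s, y s)).comp (tendsto_const_nhds.prodMk_nhds hs')).const_mul _
  have hdiff : Tendsto (fun n => volterraInt α (fun s => G (s, Y (φ n) s)) (max (t - δ (φ n)) 0) -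
      volterraInt α (fun s => G (s, Y (φ n) s)) t) atTop (𝓝 0) := by
    refine squeeze_zero_norm (fun n => ?_)
      ((tendsto_const_mul_abs_rpow hα0 (2 * M / α)).comp (hδ.comp hφ.tendsto_atTop))
    have := abs_volterraInt_sub_le hα (hGc _ (hYc (φ n))) (fun s => hM _) (t - δ (φ n)) t
    rw [max_eq_left ht.1, sub_sub_cancel_left, abs_neg] at this
    exact this
  have hsum := ((hdiff.add hdom).const_mul c).const_add y0
  rw [zero_add] at hsum
  refine hsum.congr fun n => ?_
  rw [hY (φ n) t ht.2, sub_add_cancel]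


/-- Local existence for a Caputo fractional IVP, Diethelm–Ford: with
`D = [0,t*] × [y₀−K*, y₀+K*]`, `g : D → ℝ` continuous, `M* = sup_D |g|`, and
`T* = t*` if `M* = 0`, `T* = min{t*, (K* Γ(1+α)/M*)^{1/α}}` otherwise, there exists a
continuous solution `y ∈ C[0,T*]` of the Caputo IVP `∂ₜ^α y = g(t,y)`, `y(0) = y₀`,
equivalently of the Volterra equation
`y(t) = y₀ + (1/Γ(α)) ∫₀ᵗ (t−s)^{α−1} g(s,y(s)) ds`. -/
theorem caputo_ivp_local_existence
    (α : ℝ) (hα : α ∈ Set.Ioo (0 : ℝ) 1)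
    (y0 Kstar tstar : ℝ) (hK : 0 < Kstar) (ht : 0 < tstar)
    (g : ℝ × ℝ → ℝ)
    (hg : ContinuousOn g (Set.Icc 0 tstar ×ˢ Set.Icc (y0 - Kstar) (y0 + Kstar)))
    (Mstar : ℝ)
    (hM : Mstar = sSup ((fun p => |g p|) ''
      (Set.Icc 0 tstar ×ˢ Set.Icc (y0 - Kstar) (y0 + Kstar))))
    (Tstar : ℝ)
    (hTstar : Tstar = if Mstar = 0 then tstar
      else min tstar ((Kstar * Real.Gamma (1 + α) / Mstar) ^ (1 / α))) :
    ∃ y : ℝ → ℝ, ContinuousOn y (Set.Icc 0 Tstar) ∧ y 0 = y0 ∧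
      (∀ t ∈ Set.Icc (0 : ℝ) Tstar, |y t - y0| ≤ Kstar) ∧
      (∀ t ∈ Set.Icc (0 : ℝ) Tstar,
        y t = y0 + (1 / Real.Gamma α) * ∫ s in Set.Ioo 0 t, (t - s) ^ (α - 1) * g (s, y s)) := by
  obtain ⟨hα0, hα1⟩ := id hα
  set D : Set (ℝ × ℝ) := Icc 0 tstar ×ˢ Icc (y0 - Kstar) (y0 + Kstar) with hD
  have hgM : ∀ p ∈ D, |g p| ≤ Mstar := by
    intro p hp
    rw [hM]
    exact le_csSup ((isCompact_Icc.prod isCompact_Icc).image_of_continuousOn hg.abs).bddAbove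
      (mem_image_of_mem _ hp)
  have hM0 : 0 ≤ Mstar := (abs_nonneg _).trans
    (hgM (0, y0) ⟨⟨le_rfl, ht.le⟩, by constructor <;> simp <;> linarith⟩)
  have hΓ : 0 < Gamma α := Gamma_pos_of_pos hα0
  have hΓ1 : Gamma (1 + α) = α * Gamma α := by rw [add_comm, Gamma_add_one hα0.ne']
  have hΓ1pos : 0 < Gamma (1 + α) := by rw [hΓ1]; positivity
  have hT0 : 0 ≤ Tstar := by
    rw [hTstar]
    split_ifs
    · exact ht.le
    · exact le_min ht.le (by positivity)
  have hTt : Tstar ≤ tstar := by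
    rw [hTstar]
    split_ifs
    · exact le_rfl
    · exact min_le_left _ _
  have hTK : Mstar * Tstar ^ α ≤ Kstar * Gamma (1 + α) := by
    by_cases h : Mstar = 0
    · rw [h, zero_mul]; positivity
    · have hMpos : 0 < Mstar := lt_of_le_of_ne hM0 (Ne.symm h)
      rw [if_neg h] at hTstar
      have hle : Tstar ≤ (Kstar * Gamma (1 + α) / Mstar) ^ (1 / α) :=
        hTstar.trans_le (min_le_right _ _)
      have hpow := rpow_le_rpow hT0 hle hα0.le
      rw [← rpow_mul (by positivity), one_div_mul_cancel hα0.ne', rpow_one,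
        le_div_iff₀ hMpos] at hpow
      linarith
  -- `P` is the nearest-point projection of the plane onto the rectangle `D`.
  let P : ℝ × ℝ → ℝ × ℝ := fun p =>
    (max 0 (min p.1 tstar), max (y0 - Kstar) (min p.2 (y0 + Kstar)))
  have hPc : Continuous P := by fun_prop
  have hPD : ∀ p, P p ∈ D := fun p =>
    ⟨⟨le_max_left _ _, max_le ht.le (min_le_right _ _)⟩,
      ⟨le_max_left _ _, max_le (by linarith) (min_le_right _ _)⟩⟩
  have hPid : ∀ p ∈ D, P p = p := by
    rintro ⟨a, b⟩ ⟨⟨h1, h2⟩, ⟨h3, h4⟩⟩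
    simp only at h1 h2 h3 h4
    simp only [P, min_eq_left h2, min_eq_left h4, max_eq_right h1, max_eq_right h3]
  have hGM : ∀ p, |g (P p)| ≤ Mstar := fun p => hgM _ (hPD p)
  obtain ⟨y, hyc, hy⟩ := exists_volterra_solution hα (G := fun p => g (P p))
    (hg.comp_continuous hPc hPD) hGM y0 (1 / Gamma α) hT0
  have hbound : ∀ t ∈ Icc (0 : ℝ) Tstar, |y t - y0| ≤ Kstar := by
    intro t htT
    rw [hy t htT, add_sub_cancel_left, abs_mul, abs_of_pos (one_div_pos.2 hΓ)]
    have h1 := abs_volterraInt_le hα0 (h := fun s => g (P (s, y s))) (fun s => hGM _) htT.1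
    have h2 : Mstar * t ^ α ≤ Mstar * Tstar ^ α :=
      mul_le_mul_of_nonneg_left (rpow_le_rpow htT.1 htT.2 hα0.le) hM0
    calc _ ≤ 1 / Gamma α * (Mstar * t ^ α / α) :=
          mul_le_mul_of_nonneg_left h1 (one_div_pos.2 hΓ).le
      _ ≤ 1 / Gamma α * (Kstar * Gamma (1 + α) / α) := by
          have := h2.trans hTK
          gcongr
      _ = Kstar := by rw [hΓ1]; field_simp
  refine ⟨y, hyc.continuousOn, ?_, hbound, fun t htT => ?_⟩
  · simpa [volterraInt] using hy 0 ⟨le_rfl, hT0⟩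
  · rw [hy t htT, volterraInt, intervalIntegral.integral_of_le htT.1,
      integral_Ioc_eq_integral_Ioo]
    congr 2
    refine setIntegral_congr_fun measurableSet_Ioo fun s hs => ?_
    have hsT : s ∈ Icc (0 : ℝ) Tstar := ⟨hs.1.le, hs.2.le.trans htT.2⟩
    have hb := abs_le.1 (hbound s hsT)
    have hmem : (s, y s) ∈ D :=
      ⟨⟨hsT.1, hsT.2.trans hTt⟩, ⟨by linarith [hb.1], by linarith [hb.2]⟩⟩
    simp only [hPid _ hmem]
end

section
/- (Mittag-Leffler bound for a linear fractional Volterra equation.) Let α ∈ (0,1), T > 0, λ ≥ 0, C ≥ 0, let m : [0,T] → ℝ be measurable with |m(τ)| ≤ C for all τ, let y₀ ∈ ℝ, and let y : [0,T] → ℝ be continuous with y(t) = y₀ − λ ∫₀^t ((t−τ)^{α−1}/Γ(α)) m(τ) y(τ) dτ for all t ∈ [0,T]. Then |y(t)| ≤ |y₀| · E_α( λ C t^α ) for all t ∈ [0,T]. -/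
/-!
The proof is Picard iteration of the inequality `|y| ≤ |y₀| + λC · I^α |y|`, where
`I^α f (t) = ∫₀ᵗ (t-τ)^{α-1}/Γ(α) f(τ) dτ` is the Riemann-Liouville integral. Write
`e_j(t) = K^j t^{αj} / Γ(1+αj)` with `K = λC`. The Beta integral gives
`K · I^α e_j = e_{j+1}` (`mlTerm_integral`), so starting from a bound `|y| ≤ M = M e_0`
on the compact interval, `n` iterations give `|y| ≤ |y₀| ∑_{j<n} e_j + M e_n`
(`abs_le_iterate`). The series `∑ e_j` converges because `Γ(1+s) ≥ R^s e^{-R}` for every `R > 0`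
(`rpow_mul_exp_neg_le_Gamma`); hence `e_n → 0` and the sum tends to `E_α(K t^α)`.
-/

open MeasureTheory Real Set

/-- The Mittag-Leffler function `E_α(x) = Σ_{j≥0} x^j / Γ(1 + α j)` (real version). -/
noncomputable def mittagLeffler (α x : ℝ) : ℝ := ∑' j : ℕ, x ^ j / Real.Gamma (1 + α * j)

/-- The Beta integral over `(0, t)`, normalised by the Gamma functions: it expresses the semigroup
law for the Riemann-Liouville kernels `t^{a-1}/Γ(a)`. -/
lemma kernel_integral {a b t : ℝ} (ha : 0 < a) (hb : 0 < b) (ht : 0 < t) :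
    ∫ τ in Set.Ioo 0 t, ((t - τ) ^ (a - 1) / Real.Gamma a) * (τ ^ (b - 1) / Real.Gamma b)
      = t ^ (a + b - 1) / Real.Gamma (a + b) := by
  have h1 := Complex.betaIntegral_scaled (b : ℂ) (a : ℂ) ht
  have h2 := Complex.Gamma_mul_Gamma_eq_betaIntegral (s := (b : ℂ)) (t := (a : ℂ))
    (by simpa using hb) (by simpa using ha)
  have hGa := Real.Gamma_pos_of_pos ha
  have hGb := Real.Gamma_pos_of_pos hb
  have hGab := Real.Gamma_pos_of_pos (add_pos hb ha)
  have h3 : ((∫ τ in Set.Ioo 0 t, τ ^ (b - 1) * (t - τ) ^ (a - 1) : ℝ) : ℂ)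
      = (t : ℂ) ^ ((b : ℂ) + a - 1) * Complex.betaIntegral b a := by
    rw [← h1, intervalIntegral.integral_of_le ht.le, integral_Ioc_eq_integral_Ioo,
      ← integral_complex_ofReal]
    refine setIntegral_congr_fun measurableSet_Ioo fun x hx => ?_
    have := Complex.ofReal_cpow hx.1.le (b - 1)
    have := Complex.ofReal_cpow (sub_pos.2 hx.2).le (a - 1)
    push_cast at *
    simp [*]
  have h4 : (t : ℂ) ^ ((b : ℂ) + a - 1) = ((t ^ (b + a - 1) : ℝ) : ℂ) := by
    rw [Complex.ofReal_cpow ht.le]; push_cast; rfl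
  rw [← Complex.ofReal_add, Complex.Gamma_ofReal, Complex.Gamma_ofReal, Complex.Gamma_ofReal] at h2
  have h5 : (∫ τ in Set.Ioo 0 t, τ ^ (b - 1) * (t - τ) ^ (a - 1)) * Real.Gamma (b + a)
      = t ^ (b + a - 1) * (Real.Gamma b * Real.Gamma a) := by
    apply Complex.ofReal_injective
    rw [Complex.ofReal_mul, h3, h4]
    push_cast
    rw [h2]; ring
  have h6 : ∀ τ : ℝ, ((t - τ) ^ (a - 1) / Real.Gamma a) * (τ ^ (b - 1) / Real.Gamma b)
      = (Real.Gamma b * Real.Gamma a)⁻¹ * (τ ^ (b - 1) * (t - τ) ^ (a - 1)) := by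
    intro τ; field_simp
  simp_rw [h6]
  rw [integral_const_mul, add_comm a b, eq_div_iff hGab.ne', mul_assoc, h5]
  field_simp

/-- The `j`-th term `K^j t^{αj} / Γ(1+αj)` of the series `E_α(K t^α)`. -/
noncomputable def mlTerm (α K : ℝ) (j : ℕ) (t : ℝ) : ℝ :=
  K ^ j * (t ^ (α * j) / Real.Gamma (1 + α * j))

lemma mlTerm_zero (α K t : ℝ) : mlTerm α K 0 t = 1 := by
  simp [mlTerm]

lemma kernel_mlTerm_integral {α K t : ℝ} (hα : 0 < α) (ht : 0 ≤ t) (j : ℕ) :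
    ∫ τ in Set.Ioo 0 t, ((t - τ) ^ (α - 1) / Real.Gamma α) * mlTerm α K j τ
      = K ^ j * (t ^ (α * (j + 1 : ℕ)) / Real.Gamma (1 + α * (j + 1 : ℕ))) := by
  rcases ht.eq_or_lt with rfl | ht
  · have : α * ((j + 1 : ℕ) : ℝ) ≠ 0 := by positivity
    simp only [Set.Ioo_self, Measure.restrict_empty, integral_zero_measure]
    rw [Real.zero_rpow this]; simp
  · have h := kernel_integral (a := α) (b := 1 + α * j) hα (by positivity) ht
    have e1 : ∀ τ : ℝ, ((t - τ) ^ (α - 1) / Real.Gamma α) * mlTerm α K j τ = K ^ j *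
        (((t - τ) ^ (α - 1) / Real.Gamma α) * (τ ^ (1 + α * j - 1) / Real.Gamma (1 + α * j))) := by
      intro τ
      rw [mlTerm, add_sub_cancel_left]; ring
    simp_rw [e1]
    rw [integral_const_mul, h]
    congr 3
    · push_cast; ring
    · push_cast; ring

/-- The terms of the series are shifted by the fractional integral: `K · I^α e_j = e_{j+1}`. -/
lemma mlTerm_integral {α K t : ℝ} (hα : 0 < α) (ht : 0 ≤ t) (j : ℕ) :
    K * ∫ τ in Set.Ioo 0 t, ((t - τ) ^ (α - 1) / Real.Gamma α) * mlTerm α K j τ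
      = mlTerm α K (j + 1) t := by
  rw [kernel_mlTerm_integral hα ht, mlTerm, pow_succ]; ring

lemma mlTerm_integrable {α K t : ℝ} (hα : 0 < α) (ht : 0 ≤ t) (j : ℕ) :
    IntegrableOn (fun τ => ((t - τ) ^ (α - 1) / Real.Gamma α) * mlTerm α K j τ)
      (Set.Ioo 0 t) := by
  rcases ht.eq_or_lt with rfl | ht
  · simp
  · -- For `K = 1` the integral is nonzero, which the Bochner integral of a non-integrable
    -- function cannot be.
    have h : IntegrableOn (fun τ => ((t - τ) ^ (α - 1) / Real.Gamma α) * mlTerm α 1 j τ)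
        (Set.Ioo 0 t) := by
      by_contra hn
      have h0 := kernel_mlTerm_integral (K := 1) hα ht.le j
      rw [integral_undef hn] at h0
      have : 0 < Real.Gamma (1 + α * (j + 1 : ℕ)) := Real.Gamma_pos_of_pos (by positivity)
      have : 0 < t ^ (α * (j + 1 : ℕ)) := Real.rpow_pos_of_pos ht _
      have : 0 < (1 : ℝ) ^ j * (t ^ (α * (j + 1 : ℕ)) / Real.Gamma (1 + α * (j + 1 : ℕ))) := by
        positivity
      linarith
    refine (h.const_mul (K ^ j)).congr (Filter.Eventually.of_forall fun τ => ?_)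
    simp only [mlTerm, one_pow, one_mul]; ring

/-- Superexponential growth of `Γ`, from restricting Euler's integral to `(R, ∞)`. -/
lemma rpow_mul_exp_neg_le_Gamma {R s : ℝ} (hR : 0 < R) (hs : 0 ≤ s) :
    R ^ s * Real.exp (-R) ≤ Real.Gamma (1 + s) := by
  have hint := Real.GammaIntegral_convergent (s := 1 + s) (by positivity)
  have hsub : Set.Ioi R ⊆ Set.Ioi (0 : ℝ) := Set.Ioi_subset_Ioi hR.le
  rw [Real.Gamma_eq_integral (by positivity), ← integral_exp_neg_Ioi, ← integral_const_mul]
  refine le_trans (setIntegral_mono_on ((integrableOn_exp_neg_Ioi R).const_mul _)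
    (hint.mono_set hsub) measurableSet_Ioi fun x hx => ?_)
    (setIntegral_mono_set hint ?_ hsub.eventuallyLE)
  · rw [add_sub_cancel_left, mul_comm]
    have := Real.rpow_le_rpow hR.le (le_of_lt hx) hs
    gcongr
  · filter_upwards [ae_restrict_mem measurableSet_Ioi] with x hx
    have : 0 ≤ x ^ (1 + s - 1) := Real.rpow_nonneg (le_of_lt hx) _
    simp only [Pi.zero_apply]; positivity

lemma mittagLeffler_summable {α x : ℝ} (hα : 0 < α) (hx : 0 ≤ x) :
    Summable fun j : ℕ => x ^ j / Real.Gamma (1 + α * j) := by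
  -- `R` is chosen so that `R^α = x + 1`, which makes the majorant geometric of ratio `x/(x+1)`.
  set R : ℝ := (x + 1) ^ α⁻¹ with hRdef
  have hR : 0 < R := by positivity
  have hRα : R ^ α = x + 1 := Real.rpow_inv_rpow (by positivity) hα.ne'
  have hg : Summable fun j : ℕ => Real.exp R * (x / (x + 1)) ^ j :=
    (summable_geometric_of_lt_one (by positivity)
      ((div_lt_one (by positivity)).2 (by linarith))).mul_left _
  refine Summable.of_nonneg_of_le (fun j => ?_) (fun j => ?_) hg
  · have : 0 < Real.Gamma (1 + α * j) := Real.Gamma_pos_of_pos (by positivity)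
    positivity
  · have h := rpow_mul_exp_neg_le_Gamma (s := α * j) hR (by positivity)
    rw [Real.rpow_mul hR.le, hRα, Real.rpow_natCast] at h
    calc x ^ j / Real.Gamma (1 + α * j) ≤ x ^ j / ((x + 1) ^ j * Real.exp (-R)) := by
          gcongr
      _ = Real.exp R * (x / (x + 1)) ^ j := by
          rw [Real.exp_neg, div_pow]; field_simp

lemma mlTerm_eq {α K t : ℝ} (ht : 0 ≤ t) (j : ℕ) :
    mlTerm α K j t = (K * t ^ α) ^ j / Real.Gamma (1 + α * j) := by
  rw [mlTerm, Real.rpow_mul ht, Real.rpow_natCast, mul_pow]; ring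

/-- The bound after `n` Picard iterations, starting from the constant bound `M`. -/
lemma abs_le_iterate {α T lam C M y0 : ℝ} (hα : 0 < α) (hlam : 0 ≤ lam) (hC : 0 ≤ C)
    {m y : ℝ → ℝ} (hm_bd : ∀ τ, |m τ| ≤ C) (hM : ∀ t ∈ Set.Icc 0 T, |y t| ≤ M)
    (heq : ∀ t ∈ Set.Icc (0 : ℝ) T,
      y t = y0 - lam * ∫ τ in Set.Ioo 0 t, ((t - τ) ^ (α - 1) / Real.Gamma α) * m τ * y τ)
    (n : ℕ) : ∀ t ∈ Set.Icc 0 T,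
      |y t| ≤ |y0| * ∑ j ∈ Finset.range n, mlTerm α (lam * C) j t + M * mlTerm α (lam * C) n t := by
  induction n with
  | zero => intro t ht; simpa [mlTerm_zero] using hM t ht
  | succ n ih =>
    intro t ht
    set K := lam * C with hK
    set k : ℝ → ℝ := fun τ => (t - τ) ^ (α - 1) / Real.Gamma α with hk
    have hint := fun j => mlTerm_integrable (K := K) hα ht.1 j
    have hs : IntegrableOn (fun τ => |y0| * ∑ j ∈ Finset.range n, k τ * mlTerm α K j τ)
        (Set.Ioo 0 t) := (integrable_finsetSum _ fun j _ => hint j).const_mul _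
    have hl : IntegrableOn (fun τ => M * (k τ * mlTerm α K n τ)) (Set.Ioo 0 t) :=
      (hint n).const_mul _
    have hle : ‖∫ τ in Set.Ioo 0 t, k τ * m τ * y τ‖ ≤ ∫ τ in Set.Ioo 0 t,
        C * (|y0| * ∑ j ∈ Finset.range n, k τ * mlTerm α K j τ + M * (k τ * mlTerm α K n τ)) := by
      refine norm_integral_le_of_norm_le ((hs.add hl).const_mul C) ?_
      filter_upwards [ae_restrict_mem measurableSet_Ioo] with τ hτ
      have hk0 : 0 ≤ k τ := div_nonneg (Real.rpow_nonneg (sub_pos.2 hτ.2).le _)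
        (Real.Gamma_pos_of_pos hα).le
      have h1 := ih τ ⟨hτ.1.le, hτ.2.le.trans ht.2⟩
      rw [Real.norm_eq_abs, abs_mul, abs_mul, abs_of_nonneg hk0]
      calc k τ * |m τ| * |y τ| ≤ k τ * C *
            (|y0| * ∑ j ∈ Finset.range n, mlTerm α K j τ + M * mlTerm α K n τ) := by
            gcongr
            exact hm_bd τ
        _ = _ := by rw [← Finset.mul_sum]; ring
    rw [integral_const_mul, integral_add hs hl, integral_const_mul, integral_const_mul,
      integral_finsetSum _ fun j _ => hint j] at hle
    have hshift := fun j => mlTerm_integral (K := K) hα ht.1 j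
    calc |y t| ≤ |y0| + lam * ‖∫ τ in Set.Ioo 0 t, k τ * m τ * y τ‖ := by
          rw [heq t ht]
          refine (abs_sub _ _).trans ?_
          rw [abs_mul, abs_of_nonneg hlam, Real.norm_eq_abs]
      _ ≤ _ := add_le_add_right (mul_le_mul_of_nonneg_left hle hlam) _
      _ = |y0| + (|y0| * ∑ j ∈ Finset.range n, K * ∫ τ in Set.Ioo 0 t, k τ * mlTerm α K j τ)
            + M * (K * ∫ τ in Set.Ioo 0 t, k τ * mlTerm α K n τ) := by
          rw [← Finset.mul_sum]; simp only [hk, hK]; ring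
      _ = _ := by
          simp only [hk, hshift]
          rw [Finset.sum_range_succ' _ n, mlTerm_zero]; ring

/-- Mittag-Leffler bound for a linear fractional Volterra equation: if
`|m| ≤ C` and `y(t) = y₀ − λ ∫₀ᵗ ((t−τ)^{α−1}/Γ(α)) m(τ) y(τ) dτ` on `[0,T]` with `y`
continuous, then `|y(t)| ≤ |y₀| E_α(λ C t^α)` on `[0,T]`. -/
theorem mittagLeffler_bound_linear_volterra
    (α : ℝ) (hα : α ∈ Set.Ioo (0 : ℝ) 1) (T : ℝ) (hT : 0 < T)
    (lam C : ℝ) (hlam : 0 ≤ lam) (hC : 0 ≤ C)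
    (m : ℝ → ℝ) (hm_meas : Measurable m) (hm_bd : ∀ τ, |m τ| ≤ C)
    (y0 : ℝ) (y : ℝ → ℝ) (hy_cont : ContinuousOn y (Set.Icc 0 T))
    (heq : ∀ t ∈ Set.Icc (0 : ℝ) T,
      y t = y0 - lam * ∫ τ in Set.Ioo 0 t, ((t - τ) ^ (α - 1) / Real.Gamma α) * m τ * y τ) :
    ∀ t ∈ Set.Icc (0 : ℝ) T, |y t| ≤ |y0| * mittagLeffler α (lam * C * t ^ α) := by
  intro t ht
  obtain ⟨M, hM⟩ := isCompact_Icc.exists_bound_of_continuousOn hy_cont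
  have hx : 0 ≤ lam * C * t ^ α := mul_nonneg (mul_nonneg hlam hC) (Real.rpow_nonneg ht.1 _)
  have hsum := mittagLeffler_summable hα.1 hx
  simp_rw [← mlTerm_eq ht.1] at hsum
  have hlim := (hsum.hasSum.tendsto_sum_nat.const_mul |y0|).add
    (hsum.tendsto_atTop_zero.const_mul M)
  rw [mul_zero, add_zero] at hlim
  have := ge_of_tendsto' hlim fun n => abs_le_iterate hα.1 hlam hC hm_bd hM heq n t ht
  simpa only [mittagLeffler, mlTerm_eq ht.1] using this
end
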